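/- arXiv:1708.07715 — 2 statements merged into one kernel-verified Lean document; each statement's English description precedes it below -/
import Mathlib

section
/- For every task graph G and present bias set B, the price of uncertainty r(G,B)/sup{r(G,{β}) : β ∈ B} is at most 2; equivalently, there exists a cost configuration c̃ such that G with extra costs c̃ is motivating for every β ∈ B with reward 2α/b, where b = min B and α/b = min over s–t paths P of max over edges e ∈ P of d_b(e)/b is a lower bound on r(G,{b}). -/
/-- Kleinberg–Oren task graph: a finite directed graph on `Fin n` with
non-negative edge costs and terminal nodes `s` and `t`. -/
structure TaskGraph (n : ℕ) where
  E : Finset (Fin n × Fin n)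
  c : Fin n × Fin n → ℝ
  c_nonneg : ∀ e, 0 ≤ c e
  s : Fin n
  t : Fin n

namespace TaskGraph

variable {n : ℕ}

/-- `P` is a path in `G` along edges of `G` ending at the target `t`. -/
def IsPath (G : TaskGraph n) : List (Fin n) → Prop
  | [] => False
  | [v] => v = G.t
  | v :: w :: rest => (v, w) ∈ G.E ∧ IsPath G (w :: rest)

/-- Total cost of a path given as a list of nodes. -/
def pathCost (G : TaskGraph n) : List (Fin n) → ℝ
  | [] => 0
  | [_] => 0
  | v :: w :: rest => G.c (v, w) + pathCost G (w :: rest)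

/-- `d(v)`: cost of a cheapest path from `v` to `t`. -/
noncomputable def dist (G : TaskGraph n) (v : Fin n) : ℝ :=
  sInf (G.pathCost '' {P | G.IsPath P ∧ P.head? = some v})

/-- `d_β(v,w) = c(v,w) + β·d(w)`: perceived cost of edge `(v,w)` for present bias `β`. -/
noncomputable def pc (G : TaskGraph n) (β : ℝ) (e : Fin n × Fin n) : ℝ :=
  G.c e + β * G.dist e.2

/-- One step of the agent with present bias `β`: traverse an edge minimizing perceived cost. -/
def Step (G : TaskGraph n) (β : ℝ) (v w : Fin n) : Prop :=
  (v, w) ∈ G.E ∧ ∀ w', (v, w') ∈ G.E → G.pc β (v, w) ≤ G.pc β (v, w')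

/-- Nodes reachable by the agent with present bias `β` starting from `s`. -/
def Reachable (G : TaskGraph n) (β : ℝ) (v : Fin n) : Prop :=
  Relation.ReflTransGen (G.Step β) G.s v

/-- `G` is motivating for present bias `β` and reward `r`: on every greedy walk the agent
never reaches a node `v ≠ t` where the minimum perceived cost exceeds `β·r`. -/
def Motivating (G : TaskGraph n) (β r : ℝ) : Prop :=
  ∀ v, G.Reachable β v → v ≠ G.t → ∃ w, G.Step β v w ∧ G.pc β (v, w) ≤ β * r

/-- One step of an agent whose present bias varies node by node according to `βc`. -/
def StepV (G : TaskGraph n) (βc : Fin n → ℝ) (v w : Fin n) : Prop :=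
  (v, w) ∈ G.E ∧ ∀ w', (v, w') ∈ G.E → G.pc (βc v) (v, w) ≤ G.pc (βc v) (v, w')

def ReachableV (G : TaskGraph n) (βc : Fin n → ℝ) (v : Fin n) : Prop :=
  Relation.ReflTransGen (G.StepV βc) G.s v

/-- `G` is motivating for the present bias configuration `βc` and reward `r`. -/
def MotivatingV (G : TaskGraph n) (βc : Fin n → ℝ) (r : ℝ) : Prop :=
  ∀ v, G.ReachableV βc v → v ≠ G.t → ∃ w, G.StepV βc v w ∧ G.pc (βc v) (v, w) ≤ βc v * r

/-- The task graph obtained by adding the extra costs of a cost configuration `ct`. -/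
def withCost (G : TaskGraph n) (ct : Fin n × Fin n → ℝ) (h : ∀ e, 0 ≤ ct e) : TaskGraph n where
  E := G.E
  c := fun e => G.c e + ct e
  c_nonneg := fun e => add_nonneg (G.c_nonneg e) (h e)
  s := G.s
  t := G.t

/-- `r(G,B)`: infimum over rewards admitting a cost configuration motivating for all `β ∈ B`. -/
noncomputable def rewardInf (G : TaskGraph n) (B : Set ℝ) : ℝ :=
  sInf {r : ℝ | ∃ ct : Fin n × Fin n → ℝ, ∃ h : ∀ e, 0 ≤ ct e,
    ∀ β ∈ B, (G.withCost ct h).Motivating β r}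

/-- `r(G,B^V)`: infimum over rewards admitting a cost configuration motivating for all
present bias configurations with values in `B`. -/
noncomputable def rewardInfV (G : TaskGraph n) (B : Set ℝ) : ℝ :=
  sInf {r : ℝ | ∃ ct : Fin n × Fin n → ℝ, ∃ h : ∀ e, 0 ≤ ct e,
    ∀ βc : Fin n → ℝ, (∀ v, βc v ∈ B) → (G.withCost ct h).MotivatingV βc r}

end TaskGraph


namespace PriceAux

open TaskGraph

variable {n : ℕ}

lemma pathCost_nonneg (G : TaskGraph n) : ∀ P : List (Fin n), 0 ≤ G.pathCost P
  | [] => le_refl _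
  | [_] => le_refl _
  | v :: w :: rest => add_nonneg (G.c_nonneg _) (pathCost_nonneg G (w :: rest))

lemma dist_nonneg (G : TaskGraph n) (v : Fin n) : 0 ≤ G.dist v := by
  apply Real.sInf_nonneg
  rintro x ⟨P, _, rfl⟩
  exact pathCost_nonneg G P

lemma dist_le_path (G : TaskGraph n) (v : Fin n) (P : List (Fin n)) (hP : G.IsPath P)
    (hv : P.head? = some v) : G.dist v ≤ G.pathCost P := by
  apply csInf_le
  · refine ⟨0, ?_⟩
    rintro x ⟨P, _, rfl⟩
    exact pathCost_nonneg G P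
  · exact ⟨P, ⟨hP, hv⟩, rfl⟩

lemma le_dist (G : TaskGraph n) (v : Fin n) (x : ℝ)
    (hp : ∃ P, G.IsPath P ∧ P.head? = some v)
    (h : ∀ P, G.IsPath P → P.head? = some v → x ≤ G.pathCost P) : x ≤ G.dist v := by
  obtain ⟨P, hP⟩ := hp
  refine le_csInf ⟨G.pathCost P, P, hP, rfl⟩ ?_
  rintro y ⟨Q, ⟨h1, h2⟩, rfl⟩
  exact h Q h1 h2

lemma dist_le_edge (G : TaskGraph n) (hp : ∀ v, ∃ P, G.IsPath P ∧ P.head? = some v)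
    (v w : Fin n) (h : (v, w) ∈ G.E) : G.dist v ≤ G.c (v, w) + G.dist w := by
  have : G.dist v - G.c (v, w) ≤ G.dist w := by
    apply le_dist G w _ (hp w)
    intro P hP hw
    match P, hP, hw with
    | x :: rest, hP, hw =>
      simp only [List.head?_cons, Option.some.injEq] at hw
      subst hw
      have := dist_le_path G v (v :: x :: rest) ⟨h, hP⟩ rfl
      simp only [pathCost] at this
      linarith
  linarith

lemma dist_t (G : TaskGraph n) : G.dist G.t ≤ 0 :=
  dist_le_path G G.t [G.t] rfl rfl

lemma exists_min (G : TaskGraph n) (f : Fin n → ℝ) (v w0 : Fin n) (h0 : (v, w0) ∈ G.E) :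
    ∃ w, (v, w) ∈ G.E ∧ ∀ w', (v, w') ∈ G.E → f w ≤ f w' := by
  classical
  obtain ⟨w, hw, h⟩ := Finset.exists_min_image
    (Finset.univ.filter (fun w => (v, w) ∈ G.E)) f ⟨w0, by simpa using h0⟩
  exact ⟨w, by simpa using hw, fun w' hw' => h w' (by simpa using hw')⟩

lemma exists_edge (G : TaskGraph n) (hp : ∀ v, ∃ P, G.IsPath P ∧ P.head? = some v)
    (v : Fin n) (hv : v ≠ G.t) : ∃ w, (v, w) ∈ G.E := by
  obtain ⟨P, hP, h⟩ := hp v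
  match P, hP, h with
  | [x], hP, h =>
    simp only [List.head?_cons, Option.some.injEq] at h
    subst h
    exact absurd hP hv
  | x :: w :: rest, hP, h =>
    simp only [List.head?_cons, Option.some.injEq] at h
    subst h
    exact ⟨w, hP.1⟩

lemma dist_attained (G : TaskGraph n) (hp : ∀ v, ∃ P, G.IsPath P ∧ P.head? = some v)
    (v : Fin n) (hv : v ≠ G.t) :
    ∃ w, (v, w) ∈ G.E ∧ G.c (v, w) + G.dist w ≤ G.dist v := by
  obtain ⟨w0, h0⟩ := exists_edge G hp v hv
  obtain ⟨w, hw, hmin⟩ := exists_min G (fun w => G.c (v, w) + G.dist w) v w0 h0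
  refine ⟨w, hw, le_dist G v _ (hp v) ?_⟩
  intro P hP h
  match P, hP, h with
  | [x], hP, h =>
    simp only [List.head?_cons, Option.some.injEq] at h
    subst h
    exact absurd hP hv
  | x :: y :: rest, hP, h =>
    simp only [List.head?_cons, Option.some.injEq] at h
    subst h
    have h1 := hmin y hP.1
    have h2 := dist_le_path G y (y :: rest) hP.2 rfl
    simp only [pathCost]
    linarith

lemma isPath_withCost (G : TaskGraph n) (ct) (h : ∀ e, 0 ≤ ct e) :
    ∀ P : List (Fin n), (G.withCost ct h).IsPath P ↔ G.IsPath P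
  | [] => Iff.rfl
  | [_] => Iff.rfl
  | v :: w :: rest => by
    have := isPath_withCost G ct h (w :: rest)
    simp only [IsPath, this]
    rfl

lemma pathCost_withCost (G : TaskGraph n) (ct) (h : ∀ e, 0 ≤ ct e) :
    ∀ P : List (Fin n), G.pathCost P ≤ (G.withCost ct h).pathCost P
  | [] => le_refl _
  | [_] => le_refl _
  | v :: w :: rest => by
    have := pathCost_withCost G ct h (w :: rest)
    have h2 := h (v, w)
    simp only [pathCost]
    have : (G.withCost ct h).c (v, w) = G.c (v, w) + ct (v, w) := rfl
    linarith

lemma path_withCost (G : TaskGraph n) (hp : ∀ v, ∃ P, G.IsPath P ∧ P.head? = some v)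
    (ct) (h : ∀ e, 0 ≤ ct e) : ∀ v, ∃ P, (G.withCost ct h).IsPath P ∧ P.head? = some v := by
  intro v
  obtain ⟨P, h1, h2⟩ := hp v
  exact ⟨P, (isPath_withCost G ct h P).2 h1, h2⟩

lemma dist_le_withCost (G : TaskGraph n) (hp : ∀ v, ∃ P, G.IsPath P ∧ P.head? = some v)
    (ct) (h : ∀ e, 0 ≤ ct e) (v : Fin n) : G.dist v ≤ (G.withCost ct h).dist v := by
  apply le_dist _ _ _ (path_withCost G hp ct h v)
  intro P hP hv
  exact (dist_le_path G v P ((isPath_withCost G ct h P).1 hP) hv).trans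
    (pathCost_withCost G ct h P)

lemma rank_le_t (G : TaskGraph n) (rank : Fin n → ℕ) (hr : ∀ e ∈ G.E, rank e.1 < rank e.2) :
    ∀ P : List (Fin n), G.IsPath P → ∀ v ∈ P, rank v ≤ rank G.t
  | [], h, _, _ => h.elim
  | [x], h, v, hv => by
    simp only [List.mem_singleton] at hv
    subst hv
    have : v = G.t := h
    rw [this]
  | x :: y :: rest, h, v, hv => by
    have ih := rank_le_t G rank hr (y :: rest) h.2
    rcases List.mem_cons.1 hv with rfl | hv
    · exact (hr _ h.1).le.trans (ih y List.mem_cons_self)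
    · exact ih v hv

lemma suffix_path (G : TaskGraph n) :
    ∀ P : List (Fin n), G.IsPath P → ∀ v ∈ P, ∃ Q, G.IsPath Q ∧ Q.head? = some v
  | [], h, _, _ => h.elim
  | [x], h, v, hv => by
    simp only [List.mem_singleton] at hv
    subst hv
    exact ⟨[v], h, rfl⟩
  | x :: y :: rest, h, v, hv => by
    rcases List.mem_cons.1 hv with rfl | hv
    · exact ⟨_, h, rfl⟩
    · exact suffix_path G (y :: rest) h.2 v hv

/-- The tree distance to the node set `S`. -/
lemma exists_D (G : TaskGraph n) (rank : Fin n → ℕ) (hr : ∀ v, rank v ≤ rank G.t)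
    (S : Set (Fin n)) (p : Fin n → Fin n)
    (hp : ∀ v, v ≠ G.t → rank v < rank (p v)) :
    ∃ D : Fin n → ℝ, (∀ v, 0 ≤ D v) ∧ (∀ v, v ∈ S ∨ v = G.t → D v = 0) ∧
      ∀ v, v ∉ S → v ≠ G.t → D v = G.c (v, p v) + D (p v) := by
  classical
  have wf : WellFounded (fun x y : Fin n => rank G.t - rank x < rank G.t - rank y) :=
    (measure (fun x : Fin n => rank G.t - rank x)).wf
  have key : ∀ v, v ≠ G.t → rank G.t - rank (p v) < rank G.t - rank v := by
    intro v hv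
    have := hp v hv
    have := hr (p v)
    omega
  let F : ∀ v : Fin n, (∀ y, rank G.t - rank y < rank G.t - rank v → ℝ) → ℝ :=
    fun v rec => if h : v ∈ S ∨ v = G.t then 0 else
      G.c (v, p v) + rec (p v) (key v (fun h' => h (Or.inr h')))
  have heq : ∀ v, wf.fix F v = F v (fun y _ => wf.fix F y) := fun v => wf.fix_eq F v
  have h1 : ∀ v, v ∈ S ∨ v = G.t → wf.fix F v = 0 := by
    intro v hv
    rw [heq]
    simp only [F, dif_pos hv]
  have h2 : ∀ v, v ∉ S → v ≠ G.t → wf.fix F v = G.c (v, p v) + wf.fix F (p v) := by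
    intro v hv hv'
    have : ¬ (v ∈ S ∨ v = G.t) := by tauto
    rw [heq]
    simp only [F, dif_neg this]
  refine ⟨wf.fix F, ?_, h1, h2⟩
  intro v
  induction v using wf.induction with
  | _ v ih =>
    by_cases hv : v ∈ S ∨ v = G.t
    · rw [h1 v hv]
    · push Not at hv
      rw [h2 v hv.1 hv.2]
      exact add_nonneg (G.c_nonneg _) (ih _ (key v hv.2))

/-- The main construction. -/
lemma main_construction (G : TaskGraph n) (rank : Fin n → ℕ)
    (hrE : ∀ e ∈ G.E, rank e.1 < rank e.2) (hrt : ∀ v, rank v ≤ rank G.t)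
    (hp : ∀ v, ∃ P, G.IsPath P ∧ P.head? = some v)
    (b r : ℝ) (hb : 0 < b) (hr : 0 ≤ r) (S : Set (Fin n)) (hs : G.s ∈ S)
    (hS : ∀ v ∈ S, v ≠ G.t → ∃ w ∈ S, (v, w) ∈ G.E ∧ G.pc b (v, w) ≤ b * r) :
    ∃ ct : Fin n × Fin n → ℝ, ∃ h : ∀ e, 0 ≤ ct e,
      ∀ β, b ≤ β → β ≤ 1 → (G.withCost ct h).Motivating β (2 * r) := by
  classical
  have hσ : ∀ v, ∃ w, v ∈ S → v ≠ G.t → w ∈ S ∧ (v, w) ∈ G.E ∧ G.pc b (v, w) ≤ b * r := by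
    intro v
    by_cases h : v ∈ S ∧ v ≠ G.t
    · obtain ⟨w, h1⟩ := hS v h.1 h.2
      exact ⟨w, fun _ _ => h1⟩
    · exact ⟨v, fun h1 h2 => absurd ⟨h1, h2⟩ h⟩
  choose σ hσ using hσ
  have hϖ : ∀ v, ∃ w, v ≠ G.t → (v, w) ∈ G.E ∧ G.c (v, w) + G.dist w ≤ G.dist v := by
    intro v
    by_cases h : v ≠ G.t
    · obtain ⟨w, h1⟩ := dist_attained G hp v h
      exact ⟨w, fun _ => h1⟩
    · exact ⟨v, fun h1 => absurd h1 h⟩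
  choose p hpE using hϖ
  obtain ⟨D, D0, DS, DN⟩ := exists_D G rank hrt S p (fun v hv => hrE _ (hpE v hv).1)
  let ct : Fin n × Fin n → ℝ := fun e =>
    if e.1 ∈ S then
      (if e.2 = σ e.1 then 0 else if e.2 = p e.1 then G.c e + D e.2 else 2 * r + 1)
    else (if e.2 = p e.1 then 0 else 2 * G.dist e.1 + 2 * r + 1)
  have hct : ∀ e, 0 ≤ ct e := by
    intro e
    have h1 := G.c_nonneg e
    have h2 := D0 e.2
    have h3 := dist_nonneg G e.1
    simp only [ct]
    split_ifs <;> linarith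
  refine ⟨ct, hct, ?_⟩
  intro β hbβ hβ1
  have hβ : 0 < β := hb.trans_le hbβ
  set H := G.withCost ct hct with hH
  have hHp : ∀ v, ∃ P, H.IsPath P ∧ P.head? = some v := path_withCost G hp ct hct
  have hc : ∀ e, H.c e = G.c e + ct e := fun _ => rfl
  have hHE : H.E = G.E := rfl
  have ctσ : ∀ v, v ∈ S → ct (v, σ v) = 0 := by
    intro v hv
    simp [ct, hv]
  have ctp : ∀ v, v ∉ S → ct (v, p v) = 0 := by
    intro v hv
    simp [ct, hv]
  have ctp' : ∀ v, v ∈ S → p v ≠ σ v → ct (v, p v) = G.c (v, p v) + D (p v) := by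
    intro v hv h
    simp [ct, hv, h]
  have ctO : ∀ v w, v ∉ S → w ≠ p v → ct (v, w) = 2 * G.dist v + 2 * r + 1 := by
    intro v w hv h
    simp [ct, hv, h]
  have ctO' : ∀ v w, v ∈ S → w ≠ σ v → w ≠ p v → ct (v, w) = 2 * r + 1 := by
    intro v w hv h h'
    simp [ct, hv, h, h']
  -- upper bound on the modified distance
  have hU : ∀ k : ℕ, ∀ v, rank G.t - rank v ≤ k → H.dist v ≤ 2 * G.dist v - D v := by
    intro k
    induction k with
    | zero =>
      intro v hk
      by_cases hv : v = G.t
      · subst hv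
        have h1 : H.dist G.t ≤ 0 := dist_t H
        have h2 := dist_nonneg G G.t
        rw [DS G.t (Or.inr rfl)]
        linarith
      · have h1 := hrE _ (hpE v hv).1
        have h2 := hrt (p v)
        simp only at h1
        omega
    | succ k ih =>
      intro v hk
      by_cases hv : v = G.t
      · subst hv
        have h1 : H.dist G.t ≤ 0 := dist_t H
        have h2 := dist_nonneg G G.t
        rw [DS G.t (Or.inr rfl)]
        linarith
      · obtain ⟨hE, hd⟩ := hpE v hv
        have h1 := hrE _ hE
        have h2 := hrt (p v)
        simp only at h1
        have h3 := ih (p v) (by omega)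
        have h4 := dist_le_edge H hHp v (p v) hE
        rw [hc] at h4
        have h5 := G.c_nonneg (v, p v)
        have h6 := D0 (p v)
        by_cases hvS : v ∈ S
        · rw [DS v (Or.inl hvS)]
          by_cases hps : p v = σ v
          · have := ctσ v hvS
            rw [← hps] at this
            linarith
          · rw [ctp' v hvS hps] at h4
            linarith
        · rw [DN v hvS hv]
          rw [ctp v hvS] at h4
          linarith
  have hU' : ∀ v, H.dist v ≤ 2 * G.dist v - D v := fun v => hU _ v le_rfl
  have hβr : β * (2 * r) ≤ 2 * r := by nlinarith
  -- monotonicity of the modified distance off `S`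
  have hmono : ∀ v, v ∉ S → v ≠ G.t → H.dist (p v) ≤ H.dist v := by
    intro v hv hvt
    obtain ⟨w, hw, hd⟩ := dist_attained H hHp v hvt
    rw [hc] at hd
    have h5 := G.c_nonneg (v, w)
    have h6 := hct (v, w)
    by_cases h : w = p v
    · subst h
      linarith
    · have h1 := ctO v w hv h
      have h2 := hU' v
      have h3 := D0 v
      have h4 := dist_nonneg H w
      linarith
  -- every node satisfying the invariant has a cheap edge
  have hcheap : ∀ v, v ≠ G.t → (v ∈ S ∨ D v + β * H.dist v ≤ β * (2 * r)) →
      ∃ w, (v, w) ∈ G.E ∧ H.pc β (v, w) ≤ β * (2 * r) := by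
    intro v hvt hv
    by_cases hvS : v ∈ S
    · obtain ⟨_, h2, h3⟩ := hσ v hvS hvt
      refine ⟨σ v, h2, ?_⟩
      simp only [pc] at h3 ⊢
      rw [hc, ctσ v hvS]
      have h4 := hU' (σ v)
      have h5 := D0 (σ v)
      have h6 := G.c_nonneg (v, σ v)
      have h7 : β * H.dist (σ v) ≤ β * (2 * G.dist (σ v)) :=
        mul_le_mul_of_nonneg_left (by linarith) hβ.le
      have h8 : 0 ≤ r - G.dist (σ v) := by
        by_contra hcon
        push Not at hcon
        nlinarith
      have h9 : b * (r - G.dist (σ v)) ≤ β * (r - G.dist (σ v)) :=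
        mul_le_mul_of_nonneg_right hbβ h8
      nlinarith
    · have hv' := hv.resolve_left hvS
      refine ⟨p v, (hpE v hvt).1, ?_⟩
      simp only [pc]
      rw [hc, ctp v hvS]
      have h1 := DN v hvS hvt
      have h2 := D0 (p v)
      have h3 := mul_le_mul_of_nonneg_left (hmono v hvS hvt) hβ.le
      linarith
  have hinv : ∀ v, H.Reachable β v → (v ∈ S ∨ D v + β * H.dist v ≤ β * (2 * r)) := by
    intro v hv
    induction hv with
    | refl => exact Or.inl hs
    | @tail v w _ hstep ih =>
      have hE : (v, w) ∈ G.E := hstep.1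
      have hvt : v ≠ G.t := by
        rintro rfl
        have := hrE _ hE
        have := hrt w
        simp only at *
        omega
      obtain ⟨w0, hw0, hle⟩ := hcheap v hvt ih
      have hle' : H.pc β (v, w) ≤ β * (2 * r) := (hstep.2 w0 hw0).trans hle
      simp only [pc] at hle'
      rw [hc] at hle'
      have h1 := G.c_nonneg (v, w)
      have h2 := dist_nonneg H w
      have h3 := mul_nonneg hβ.le h2
      by_cases hvS : v ∈ S
      · by_cases hwσ : w = σ v
        · left
          rw [hwσ]
          exact (hσ v hvS hvt).1
        · by_cases hwp : w = p v
          · right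
            subst hwp
            rw [ctp' v hvS hwσ] at hle'
            linarith
          · rw [ctO' v w hvS hwσ hwp] at hle'
            linarith
      · by_cases hwp : w = p v
        · right
          subst hwp
          have h4 := ih.resolve_left hvS
          rw [DN v hvS hvt] at h4
          have h3 := mul_le_mul_of_nonneg_left (hmono v hvS hvt) hβ.le
          linarith
        · rw [ctO v w hvS hwp] at hle'
          have := dist_nonneg G v
          linarith
  intro v hv hvt
  obtain ⟨w0, hw0, hle⟩ := hcheap v hvt (hinv v hv)
  obtain ⟨w, hw, hmin⟩ := exists_min H (fun w => H.pc β (v, w)) v w0 hw0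
  exact ⟨w, ⟨hw, hmin⟩, (hmin w0 hw0).trans hle⟩

end PriceAux

open TaskGraph in
/-- The price of uncertainty is at most `2`: for every task graph `G` (a finite DAG in
which every node lies on some `s`–`t` path) and every present bias set `B ⊆ (0,1]`
possessing a minimum, the infimal reward `r(G,B)` admitting a cost configuration
motivating for all `β ∈ B` is at most twice the supremum over `β ∈ B` of the infimal
reward `r(G,{β})` for the fixed bias `β`. -/
theorem price_of_uncertainty_le_two {n : ℕ} (G : TaskGraph n)
    (hdag : ∃ rank : Fin n → ℕ, ∀ e ∈ G.E, rank e.1 < rank e.2)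
    (hconn : ∀ v : Fin n, ∃ P : List (Fin n),
      G.IsPath P ∧ P.head? = some G.s ∧ v ∈ P)
    (B : Set ℝ) (hB : B ⊆ Set.Ioc 0 1) (hne : B.Nonempty)
    (b : ℝ) (hb : IsLeast B b) :
    G.rewardInf B ≤ 2 * sSup ((fun β => G.rewardInf {β}) '' B) := by
  classical
  obtain ⟨rank, hrE⟩ := hdag
  have hrt : ∀ v, rank v ≤ rank G.t := by
    intro v
    obtain ⟨P, h1, _, h3⟩ := hconn v
    exact PriceAux.rank_le_t G rank hrE P h1 v h3
  have hp : ∀ v, ∃ P, G.IsPath P ∧ P.head? = some v := by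
    intro v
    obtain ⟨P, h1, _, h3⟩ := hconn v
    exact PriceAux.suffix_path G P h1 v h3
  have hbpos : 0 < b := (hB hb.1).1
  by_cases hst : G.s = G.t
  · -- degenerate case
    have hall : ∀ A : Set ℝ, G.rewardInf A = 0 := by
      intro A
      have : {r : ℝ | ∃ ct : Fin n × Fin n → ℝ, ∃ h : ∀ e, 0 ≤ ct e,
          ∀ β ∈ A, (G.withCost ct h).Motivating β r} = Set.univ := by
        ext r
        simp only [Set.mem_setOf_eq, Set.mem_univ, iff_true]
        refine ⟨fun _ => 0, fun _ => le_rfl, ?_⟩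
        intro β _ v hv hvt
        exfalso
        apply hvt
        induction hv with
        | refl => exact hst
        | @tail v w _ hstep ih =>
          have hv : v = G.t := by
            by_contra hne'
            exact hne' (ih hne')
          have hE : (v, w) ∈ G.E := hstep.1
          have h1 := hrE _ hE
          have h2 := hrt w
          rw [hv] at h1
          simp only at h1
          omega
      unfold rewardInf
      rw [this]
      exact Real.sInf_univ
    rw [hall B]
    have : (fun β => G.rewardInf {β}) '' B = {0} := by
      simp only [hall]
      exact hne.image_const 0
    rw [this]
    simp
  · let F : Set ℝ → Set ℝ := fun A => {r : ℝ | ∃ ct : Fin n × Fin n → ℝ, ∃ h : ∀ e, 0 ≤ ct e,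
      ∀ β ∈ A, (G.withCost ct h).Motivating β r}
    have hF : ∀ A, G.rewardInf A = sInf (F A) := fun _ => rfl
    have hnn : ∀ A : Set ℝ, (∃ β ∈ A, 0 < β) → ∀ r ∈ F A, 0 ≤ r := by
      rintro A ⟨β, hβA, hβ⟩ r ⟨ct, h, hm⟩
      obtain ⟨w, _, hw⟩ := hm β hβA G.s Relation.ReflTransGen.refl hst
      have h1 := (G.withCost ct h).c_nonneg (G.s, w)
      have h2 := mul_nonneg hβ.le (PriceAux.dist_nonneg (G.withCost ct h) w)
      simp only [pc] at hw
      by_contra hr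
      push Not at hr
      have := mul_neg_of_pos_of_neg hβ hr
      linarith
    have hmain : ∀ (r : ℝ) (S : Set (Fin n)), 0 ≤ r → G.s ∈ S →
        (∀ v ∈ S, v ≠ G.t → ∃ w ∈ S, (v, w) ∈ G.E ∧ G.pc b (v, w) ≤ b * r) →
        2 * r ∈ F B := by
      intro r S hr hs hS
      obtain ⟨ct, h, hm⟩ :=
        PriceAux.main_construction G rank hrE hrt hp b r hbpos hr S hs hS
      exact ⟨ct, h, fun β hβ => hm β (hb.2 hβ) (hB hβ).2⟩
    have hne' : (F B).Nonempty := by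
      obtain ⟨M, hM⟩ := (Finset.univ.image (fun e : Fin n × Fin n => G.pc b e)).bddAbove
      have hM' : ∀ e, G.pc b e ≤ M := fun e =>
        hM (by simp)
      refine ⟨_, hmain (|M| / b) Set.univ (by positivity) trivial ?_⟩
      intro v _ hv
      obtain ⟨w, hw⟩ := PriceAux.exists_edge G hp v hv
      refine ⟨w, trivial, hw, ?_⟩
      rw [mul_div_cancel₀ _ hbpos.ne']
      exact (hM' _).trans (le_abs_self M)
    have hsub : ∀ β ∈ B, F B ⊆ F {β} := by
      rintro β hβ r ⟨ct, h, hm⟩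
      refine ⟨ct, h, ?_⟩
      intro β' hβ'
      rw [Set.mem_singleton_iff.1 hβ']
      exact hm β hβ
    have hbddB : BddBelow (F B) := ⟨0, fun r hr => hnn B ⟨b, hb.1, hbpos⟩ r hr⟩
    have hbdd : ∀ β ∈ B, BddBelow (F {β}) := fun β hβ =>
      ⟨0, fun r hr => hnn {β} ⟨β, rfl, (hB hβ).1⟩ r hr⟩
    have h1 : G.rewardInf B / 2 ≤ G.rewardInf {b} := by
      rw [hF {b}]
      apply le_csInf (hne'.mono (hsub b hb.1))
      intro r hr
      have hr0 := hnn {b} ⟨b, rfl, hbpos⟩ r hr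
      obtain ⟨ct, h, hm⟩ := hr
      have hm := hm b rfl
      have : 2 * r ∈ F B := by
        apply hmain r {v | (G.withCost ct h).Reachable b v} hr0 Relation.ReflTransGen.refl
        intro v hv hvt
        obtain ⟨w, hw, hle⟩ := hm v hv hvt
        refine ⟨w, Relation.ReflTransGen.tail hv hw, hw.1, le_trans ?_ hle⟩
        simp only [pc]
        have h2 := mul_le_mul_of_nonneg_left
          (PriceAux.dist_le_withCost G hp ct h w) hbpos.le
        have h3 : (G.withCost ct h).c (v, w) = G.c (v, w) + ct (v, w) := rfl
        have h4 := h (v, w)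
        linarith
      have := csInf_le hbddB this
      rw [hF B]
      linarith
    have h2 : G.rewardInf {b} ≤ sSup ((fun β => G.rewardInf {β}) '' B) := by
      apply le_csSup
      · refine ⟨G.rewardInf B, ?_⟩
        rintro x ⟨β, hβ, rfl⟩
        exact csInf_le_csInf (hbdd β hβ) hne' (hsub β hβ)
      · exact ⟨b, hb.1, rfl⟩
    linarith
end

section
/- For every task graph G and present bias set B with range τ = max B / min B, the price of variability r(G, B^V)/sup{r(G,{β}) : β ∈ B} is at most τ + 1. -/
namespace TaskGraph

variable {n : ℕ}

/-- The potential bounding the total fee from a node at distance `x`. -/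
noncomputable def phi (r x : ℝ) : ℝ := r - (max 0 (r - x)) ^ 2 / r

lemma phi_le {r x : ℝ} (hr : 0 < r) : phi r x ≤ r := by
  unfold phi
  have : 0 ≤ (max 0 (r - x)) ^ 2 / r := by positivity
  linarith

lemma phi_mono {r x y : ℝ} (hr : 0 < r) (h : x ≤ y) : phi r x ≤ phi r y := by
  unfold phi
  have h0 : 0 ≤ max 0 (r - y) := le_max_left _ _
  have h1 : max 0 (r - y) ≤ max 0 (r - x) := max_le_max le_rfl (by linarith)
  have : (max 0 (r - y)) ^ 2 / r ≤ (max 0 (r - x)) ^ 2 / r := by gcongr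
  linarith

lemma phi_zero {r : ℝ} (hr : 0 < r) : phi r 0 = 0 := by
  unfold phi
  rw [sub_zero, max_eq_right hr.le]
  field_simp
  ring

lemma phi_nonneg {r x : ℝ} (hr : 0 < r) (hx : 0 ≤ x) : 0 ≤ phi r x := by
  rw [← phi_zero hr]; exact phi_mono hr hx

lemma phi_of_le {r x : ℝ} (h : x ≤ r) : phi r x = r - (r - x) ^ 2 / r := by
  unfold phi
  rw [max_eq_right (by linarith)]

lemma phi_of_ge {r x : ℝ} (h : r ≤ x) : phi r x = r := by
  unfold phi
  rw [max_eq_left (by linarith)]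
  simp

/-- The agent prefers to stay on the path rather than take a bad exit. -/
lemma key_ineq {r b β m c dp cu du δ Du Dp : ℝ} (hr : 0 < r) (hb : 0 < b) (hbβ : b ≤ β)
    (hβm : β ≤ m) (hm : m ≤ 1) (hcu : 0 ≤ cu) (hδ : 0 ≤ δ) (hδu : δ ≤ du)
    (hDu : Du ≤ du + phi r δ) (hDp : Dp ≤ dp + phi r dp) (hc : 0 ≤ c)
    (h1 : c + b * dp ≤ b * r) (h2 : c + b * dp ≤ cu + b * du)
    (h3 : m * r + (1 - b) * δ < du) :
    c + β * Dp < cu + (cu + du + phi r (cu + du) - cu - Du) + β * Du := by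
  have hβ : 0 < β := by linarith
  have hdp : dp ≤ r := by
    have : b * dp ≤ b * r := by linarith
    exact le_of_mul_le_mul_left this hb
  have hDp' : β * Dp ≤ β * (dp + r) :=
    mul_le_mul_of_nonneg_left (by linarith [phi_le (x := dp) hr]) hβ.le
  have hDu' : (1 - β) * Du ≤ (1 - β) * (du + phi r δ) :=
    mul_le_mul_of_nonneg_left hDu (by linarith)
  have hx : (β - b) * dp ≤ (β - b) * r := mul_le_mul_of_nonneg_left hdp (by linarith)
  rcases lt_or_ge r du with hdu | hdu
  · rw [phi_of_ge (x := cu + du) (by linarith)]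
    have e1 : (1 - β) * phi r δ ≤ (1 - β) * r :=
      mul_le_mul_of_nonneg_left (phi_le hr) (by linarith)
    have e2 : β * r < β * du := mul_lt_mul_of_pos_left hdu hβ
    linarith
  · have e0 : phi r du ≤ phi r (cu + du) := phi_mono hr (by linarith)
    rw [phi_of_le hdu] at e0
    rw [phi_of_le (hδu.trans hdu)] at hDu'
    have key : (r - du) ^ 2 / r + (β - b) * (r - du) < (1 - β) * ((r - δ) ^ 2 / r) := by
      have g0 : 0 ≤ r - du := by linarith
      have g1 : (m - b) * (r - δ) ≤ (m - b) * r :=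
        mul_le_mul_of_nonneg_left (by linarith) (by linarith)
      have g2 : r - du < (1 - m) * (r - δ) := by linarith
      have g3 : 0 < r - δ := by
        by_contra hcon
        nlinarith
      have g4 : (β - b) * r ≤ (m - b) * r :=
        mul_le_mul_of_nonneg_right (by linarith) hr.le
      have g5 : (r - du) + (β - b) * r ≤ r - δ := by
        have : 0 ≤ b * (r - δ) := by positivity
        linarith
      have g6 : (r - du) * ((r - du) + (β - b) * r) ≤ (r - du) * (r - δ) :=
        mul_le_mul_of_nonneg_left g5 g0
      have g7 : (r - du) * (r - δ) < (1 - m) * (r - δ) * (r - δ) :=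
        mul_lt_mul_of_pos_right g2 g3
      have g8 : (1 - m) * ((r - δ) * (r - δ)) ≤ (1 - β) * ((r - δ) * (r - δ)) :=
        mul_le_mul_of_nonneg_right (by linarith) (by positivity)
      have l1 : (r - du) ^ 2 / r + (β - b) * (r - du)
          = ((r - du) * ((r - du) + (β - b) * r)) / r := by field_simp
      have l2 : (1 - β) * ((r - δ) ^ 2 / r) = ((1 - β) * ((r - δ) * (r - δ))) / r := by
        field_simp
      rw [l1, l2]
      exact div_lt_div_of_pos_right (by linarith) hr
    linarith

lemma pathCost_nonneg (G : TaskGraph n) : ∀ P : List (Fin n), 0 ≤ G.pathCost P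
  | [] => le_rfl
  | [_] => le_rfl
  | v :: w :: rest => add_nonneg (G.c_nonneg _) (pathCost_nonneg G (w :: rest))

lemma dist_nonneg (G : TaskGraph n) (v : Fin n) : 0 ≤ G.dist v := by
  apply Real.sInf_nonneg
  rintro _ ⟨P, -, rfl⟩
  exact G.pathCost_nonneg P

lemma pc_nonneg (G : TaskGraph n) {β : ℝ} (hβ : 0 ≤ β) (e : Fin n × Fin n) : 0 ≤ G.pc β e :=
  add_nonneg (G.c_nonneg _) (mul_nonneg hβ (G.dist_nonneg _))

lemma bdd_paths (G : TaskGraph n) (v : Fin n) :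
    BddBelow (G.pathCost '' {P | G.IsPath P ∧ P.head? = some v}) :=
  ⟨0, by rintro _ ⟨P, -, rfl⟩; exact G.pathCost_nonneg P⟩

/-- Good graphs: acyclic, every node but the target has a successor, the target has none. -/
structure Good (G : TaskGraph n) : Prop where
  wf : WellFounded (fun w v : Fin n => (v, w) ∈ G.E)
  out : ∀ v, v ≠ G.t → ∃ w, (v, w) ∈ G.E
  tout : ∀ w, (G.t, w) ∉ G.E

lemma Good.withCost {G : TaskGraph n} (hG : G.Good) (ct h) : (G.withCost ct h).Good :=
  ⟨hG.wf, hG.out, hG.tout⟩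

lemma Good.exists_path {G : TaskGraph n} (hG : G.Good) (v : Fin n) :
    ∃ P, G.IsPath P ∧ P.head? = some v := by
  induction v using hG.wf.induction with
  | _ v ih =>
    by_cases hv : v = G.t
    · exact ⟨[v], hv, rfl⟩
    · obtain ⟨w, hw⟩ := hG.out v hv
      obtain ⟨P, hP, hh⟩ := ih w hw
      match P, hP, hh with
      | w' :: rest, hP, hh =>
        simp at hh
        subst hh
        exact ⟨v :: w' :: rest, ⟨hw, hP⟩, rfl⟩

lemma dist_t (G : TaskGraph n) : G.dist G.t = 0 :=
  le_antisymm (csInf_le (G.bdd_paths _) ⟨[G.t], ⟨rfl, rfl⟩, rfl⟩) (G.dist_nonneg _)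

lemma Good.dist_le {G : TaskGraph n} (hG : G.Good) {v w : Fin n} (h : (v, w) ∈ G.E) :
    G.dist v ≤ G.c (v, w) + G.dist w := by
  have : G.dist v - G.c (v, w) ≤ G.dist w := by
    obtain ⟨P0, hP0⟩ := hG.exists_path w
    refine le_csInf (Set.Nonempty.image _ ⟨P0, hP0⟩) ?_
    rintro _ ⟨P, ⟨hP, hh⟩, rfl⟩
    match P, hP, hh with
    | w' :: rest, hP, hh =>
      simp at hh
      subst hh
      have : G.dist v ≤ G.pathCost (v :: w' :: rest) :=
        csInf_le (G.bdd_paths _) ⟨v :: w' :: rest, ⟨And.intro h hP, rfl⟩, rfl⟩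
      have e : G.pathCost (v :: w' :: rest) = G.c (v, w') + G.pathCost (w' :: rest) := rfl
      linarith
  linarith

lemma exists_min_succ (G : TaskGraph n) (f : Fin n → ℝ) {v : Fin n}
    (h : ∃ w, (v, w) ∈ G.E) :
    ∃ w, (v, w) ∈ G.E ∧ ∀ w', (v, w') ∈ G.E → f w ≤ f w' := by
  classical
  obtain ⟨w0, hw0⟩ := h
  obtain ⟨w, hw, hmin⟩ := Finset.exists_min_image
    (Finset.univ.filter (fun w => (v, w) ∈ G.E)) f ⟨w0, by simpa using hw0⟩
  exact ⟨w, by simpa using hw, fun w' hw' => hmin w' (by simpa using hw')⟩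

lemma Good.dist_unique {G : TaskGraph n} (hG : G.Good) (D : Fin n → ℝ) (h0 : D G.t = 0)
    (h1 : ∀ v w, (v, w) ∈ G.E → D v ≤ G.c (v, w) + D w)
    (h2 : ∀ v, v ≠ G.t → ∃ w, (v, w) ∈ G.E ∧ G.c (v, w) + D w ≤ D v) (v : Fin n) :
    G.dist v = D v := by
  apply le_antisymm
  · induction v using hG.wf.induction with
    | _ v ih =>
      by_cases hv : v = G.t
      · subst hv; rw [h0, dist_t]
      · obtain ⟨w, hw, hle⟩ := h2 v hv
        have := hG.dist_le hw
        have := ih w hw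
        linarith
  · refine le_csInf (Set.Nonempty.image _ (hG.exists_path v)) ?_
    rintro _ ⟨P, ⟨hP, hh⟩, rfl⟩
    induction P generalizing v with
    | nil => simp at hh
    | cons x rest ih =>
      simp at hh
      subst hh
      match rest, hP, ih with
      | [], hP, _ =>
        have hP' : x = G.t := hP
        subst hP'
        exact h0.le
      | w :: rest, hP, ih =>
        have := ih w hP.2 rfl
        have := h1 x w hP.1
        have e : G.pathCost (x :: w :: rest) = G.c (x, w) + G.pathCost (w :: rest) := rfl
        linarith

lemma Good.exists_sigma {G : TaskGraph n} (hG : G.Good) {v : Fin n} (hv : v ≠ G.t) :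
    ∃ w, (v, w) ∈ G.E ∧ G.dist v = G.c (v, w) + G.dist w := by
  obtain ⟨w, hw, hmin⟩ := G.exists_min_succ (fun w => G.c (v, w) + G.dist w) (hG.out v hv)
  refine ⟨w, hw, le_antisymm (hG.dist_le hw) ?_⟩
  obtain ⟨P0, hP0⟩ := hG.exists_path v
  refine le_csInf (Set.Nonempty.image _ ⟨P0, hP0⟩) ?_
  rintro _ ⟨P, ⟨hP, hh⟩, rfl⟩
  match P, hP, hh with
  | [x], hP, hh =>
    simp at hh
    exact absurd (hh ▸ hP) hv
  | x :: y :: rest, hP, hh =>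
    simp at hh
    subst hh
    have a1 := hmin y hP.1
    have a2 : G.dist y ≤ G.pathCost (y :: rest) :=
      csInf_le (G.bdd_paths _) ⟨_, ⟨hP.2, rfl⟩, rfl⟩
    have e : G.pathCost (x :: y :: rest) = G.c (x, y) + G.pathCost (y :: rest) := rfl
    linarith

/-- Nodes from which an agent that has left the path stays motivated until it returns. -/
inductive Safe (G : TaskGraph n) (S : Fin n → Prop) (σ : Fin n → Fin n) (D : Fin n → ℝ)
    (b R : ℝ) : Fin n → Prop
  | tgt : Safe G S σ D b R G.t
  | mem (v) : S v → Safe G S σ D b R v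
  | step (v) : G.c (v, σ v) + b * D (σ v) ≤ b * R → Safe G S σ D b R (σ v) →
      Safe G S σ D b R v

open Classical in
lemma exists_D {G : TaskGraph n} (hG : G.Good) (S : Fin n → Prop) (σ π : Fin n → Fin n)
    (hσ : ∀ v, v ≠ G.t → (v, σ v) ∈ G.E) (hπ : ∀ v, S v → (v, π v) ∈ G.E)
    (ψ : Fin n → ℝ) :
    ∃ D : Fin n → ℝ, D G.t = 0 ∧
      (∀ v, S v → D v = min (ψ v) (G.c (v, π v) + D (π v))) ∧
      (∀ v, v ≠ G.t → ¬ S v → D v = G.c (v, σ v) + D (σ v)) := by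
  let F : (v : Fin n) → ((w : Fin n) → (v, w) ∈ G.E → ℝ) → ℝ := fun v f =>
    if hs : S v then min (ψ v) (G.c (v, π v) + f (π v) (hπ v hs))
    else if ht : v = G.t then 0 else G.c (v, σ v) + f (σ v) (hσ v ht)
  have hS : ∀ v, S v → v ≠ G.t := fun v hv h => hG.tout (π v) (h ▸ hπ v hv)
  refine ⟨hG.wf.fix F, ?_, ?_, ?_⟩
  · rw [hG.wf.fix_eq]
    have : ¬ S G.t := fun h => hS _ h rfl
    simp [F, this]
  · intro v hv
    rw [hG.wf.fix_eq]
    simp [F, hv]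
  · intro v hv hs
    rw [hG.wf.fix_eq]
    simp [F, hv, hs]

open Classical in
lemma core {G : TaskGraph n} (hG : G.Good) {r b m : ℝ} (hr : 0 < r) (hb : 0 < b) (hbm : b ≤ m)
    (hm : m ≤ 1) (hmot : G.Motivating b r) :
    ∃ ct : Fin n × Fin n → ℝ, ∃ h : ∀ e, 0 ≤ ct e, ∀ βc : Fin n → ℝ,
      (∀ v, b ≤ βc v ∧ βc v ≤ m) → (G.withCost ct h).MotivatingV βc ((m / b + 1) * r) := by
  have hR : b * ((m / b + 1) * r) = m * r + b * r := by field_simp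
  have hR2 : 2 * r ≤ (m / b + 1) * r := by
    have : 1 ≤ m / b := (one_le_div hb).2 hbm
    nlinarith
  set R := (m / b + 1) * r with hRdef
  set d := G.dist with hd
  let S : Fin n → Prop := fun v => G.Reachable b v ∧ v ≠ G.t
  have hσ0 : ∀ v, ∃ w, v ≠ G.t → (v, w) ∈ G.E ∧ d v = G.c (v, w) + d w := by
    intro v
    by_cases hv : v = G.t
    · exact ⟨v, fun h => absurd hv h⟩
    · obtain ⟨w, hw⟩ := hG.exists_sigma hv
      exact ⟨w, fun _ => hw⟩
  choose σ hσ using hσ0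
  have hπ0 : ∀ v, ∃ w, S v → G.Step b v w ∧ G.pc b (v, w) ≤ b * r := by
    intro v
    by_cases hv : S v
    · obtain ⟨w, hw⟩ := hmot v hv.1 hv.2
      exact ⟨w, fun _ => hw⟩
    · exact ⟨v, fun h => absurd h hv⟩
  choose π hπ using hπ0
  obtain ⟨D, hDt, hDS, hDn⟩ := exists_D hG S σ π (fun v hv => (hσ v hv).1)
    (fun v hv => (hπ v hv).1.1) (fun v => d v + phi r (d v))
  have hdn : ∀ v, 0 ≤ d v := G.dist_nonneg
  have hcn := G.c_nonneg
  have hDnn : ∀ v, 0 ≤ D v := by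
    intro v
    induction v using hG.wf.induction with
    | _ v ih =>
      by_cases hs : S v
      · rw [hDS v hs]
        exact le_min (add_nonneg (hdn v) (phi_nonneg hr (hdn v)))
          (add_nonneg (hcn _) (ih _ (hπ v hs).1.1))
      · by_cases hv : v = G.t
        · rw [hv, hDt]
        · rw [hDn v hv hs]
          exact add_nonneg (hcn _) (ih _ (hσ v hv).1)
  have main : ∀ u, ∃ δ, 0 ≤ δ ∧ δ ≤ d u ∧ D u ≤ d u + phi r δ ∧
      (Safe G S σ D b R u ∨ m * r + (1 - b) * δ < d u) := by
    intro u
    induction u using hG.wf.induction with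
    | _ u ih =>
      by_cases hs : S u
      · refine ⟨d u, hdn u, le_rfl, ?_, Or.inl (Safe.mem _ hs)⟩
        rw [hDS u hs]; exact min_le_left _ _
      · by_cases hu : u = G.t
        · refine ⟨d u, hdn u, le_rfl, ?_, Or.inl (hu ▸ Safe.tgt)⟩
          rw [hu, hDt]
          exact add_nonneg (hdn _) (phi_nonneg hr (hdn _))
        · obtain ⟨hE, hdu⟩ := hσ u hu
          obtain ⟨δ, h0, h1, h2, h3⟩ := ih _ hE
          have hc := hcn (u, σ u)
          have hD := hDn u hu hs
          refine ⟨δ, h0, by linarith, by linarith, ?_⟩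
          rcases h3 with h3 | h3
          · by_cases hok : G.c (u, σ u) + b * D (σ u) ≤ b * R
            · exact Or.inl (Safe.step _ hok h3)
            · right
              push Not at hok
              have a1 : b * D (σ u) ≤ b * (d (σ u) + r) :=
                mul_le_mul_of_nonneg_left (by linarith [phi_le (x := δ) hr]) hb.le
              have a2 : (1 - b) * δ ≤ (1 - b) * d (σ u) :=
                mul_le_mul_of_nonneg_left h1 (by linarith)
              linarith
          · right; linarith
  -- the exit through `σ` costs at most the potential
  have hexit : ∀ v, v ≠ G.t → G.c (v, σ v) + D (σ v) ≤ d v + phi r (d v) := by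
    intro v hv
    obtain ⟨δ, h0, h1, h2, -⟩ := main (σ v)
    have := (hσ v hv).2
    have := hcn (v, σ v)
    have := phi_mono hr (show δ ≤ d v by linarith)
    linarith
  let M : ℝ := ∑ v, D v + 1
  have hM : ∀ v, D v < M := by
    intro v
    have : D v ≤ ∑ v, D v := Finset.single_le_sum (fun i _ => hDnn i) (Finset.mem_univ v)
    simp only [M]; linarith
  have hM0 : 0 ≤ M := by
    have : 0 ≤ ∑ v, D v := Finset.sum_nonneg (fun i _ => hDnn i)
    simp only [M]; linarith
  let ct : Fin n × Fin n → ℝ := fun e =>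
    if e.1 = G.t then 0 else
    if S e.1 then
      if e.2 = π e.1 then 0 else
      if e.2 = σ e.1 then d e.1 + phi r (d e.1) - G.c (e.1, σ e.1) - D (σ e.1) else M
    else if e.2 = σ e.1 then 0 else M
  have hct : ∀ e, 0 ≤ ct e := by
    intro e
    simp only [ct]
    split_ifs with h1 h2 h3 h4 h5 <;> first | exact le_rfl | exact hM0 | skip
    have := hexit e.1 h1
    linarith
  have ctP : ∀ v, S v → ct (v, π v) = 0 := by
    intro v hv; simp [ct, hv]
  have ctE : ∀ v, S v → σ v ≠ π v →
      ct (v, σ v) = d v + phi r (d v) - G.c (v, σ v) - D (σ v) := by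
    intro v hv hne; simp [ct, hv, hne, hv.2]
  have ctN : ∀ v, ¬ S v → ct (v, σ v) = 0 := by
    intro v hv; simp [ct, hv]
  have ctM : ∀ v w, v ≠ G.t → w ≠ σ v → ¬ (S v ∧ w = π v) → ct (v, w) = M := by
    intro v w hv h1 h2
    by_cases hs : S v
    · have : w ≠ π v := fun h => h2 ⟨hs, h⟩
      simp [ct, hv, hs, this, h1]
    · simp [ct, hv, hs, h1]
  have hG2 := hG.withCost ct hct
  have hatt : ∀ v, v ≠ G.t → ∃ w, (v, w) ∈ G.E ∧ G.c (v, w) + ct (v, w) + D w ≤ D v := by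
    intro v hv
    by_cases hs : S v
    · by_cases hle : G.c (v, π v) + D (π v) ≤ d v + phi r (d v)
      · refine ⟨π v, (hπ v hs).1.1, ?_⟩
        rw [ctP v hs, hDS v hs, min_eq_right hle]; linarith
      · push Not at hle
        have hne : σ v ≠ π v := by
          intro h
          have := hexit v hv
          rw [h] at this
          linarith
        refine ⟨σ v, (hσ v hv).1, ?_⟩
        rw [ctE v hs hne, hDS v hs, min_eq_left hle.le]; linarith
    · refine ⟨σ v, (hσ v hv).1, ?_⟩
      rw [ctN v hs, hDn v hv hs]; linarith
  have hdist : ∀ v, (G.withCost ct hct).dist v = D v := by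
    apply hG2.dist_unique D hDt
    · intro v w hvw
      change D v ≤ G.c (v, w) + ct (v, w) + D w
      have hv : v ≠ G.t := fun h => hG.tout w (h ▸ hvw)
      by_cases hp : S v ∧ w = π v
      · obtain ⟨hs, rfl⟩ := hp
        rw [ctP v hs, hDS v hs]
        have := min_le_right (d v + phi r (d v)) (G.c (v, π v) + D (π v))
        linarith
      · by_cases hw : w = σ v
        · subst hw
          by_cases hs : S v
          · have hne : σ v ≠ π v := fun h => hp ⟨hs, h⟩
            rw [ctE v hs hne, hDS v hs]
            have := min_le_left (d v + phi r (d v)) (G.c (v, π v) + D (π v))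
            linarith
          · rw [ctN v hs, hDn v hv hs]; linarith
        · rw [ctM v w hv hw hp]
          have := hM v
          have := hDnn w
          have := hcn (v, w)
          linarith
    · exact hatt
  have hpc : ∀ β v w, (G.withCost ct hct).pc β (v, w) = G.c (v, w) + ct (v, w) + β * D w := by
    intro β v w
    simp only [pc, hdist]
    rfl
  refine ⟨ct, hct, ?_⟩
  intro βc hβ
  have hsafe : ∀ v, (G.withCost ct hct).ReachableV βc v → Safe G S σ D b R v := by
    intro v hv
    induction hv with
    | refl =>
      change Safe G S σ D b R G.s
      by_cases h : G.s = G.t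
      · rw [h]; exact Safe.tgt
      · exact Safe.mem _ ⟨Relation.ReflTransGen.refl, h⟩
    | @tail v w _ hst ih =>
      obtain ⟨hE, hmin⟩ := hst
      change (v, w) ∈ G.E at hE
      have hv : v ≠ G.t := fun h => hG.tout w (h ▸ hE)
      obtain ⟨hβ1, hβ2⟩ := hβ v
      by_cases hp : S v ∧ w = π v
      · obtain ⟨hs, rfl⟩ := hp
        by_cases h : π v = G.t
        · rw [h]; exact Safe.tgt
        · exact Safe.mem _ ⟨hs.1.tail (hπ v hs).1, h⟩
      · by_cases hw : w = σ v
        · subst hw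
          by_cases hs : S v
          · have hne : σ v ≠ π v := fun h => hp ⟨hs, h⟩
            obtain ⟨δ, h0, h1, h2, h3⟩ := main (σ v)
            rcases h3 with h3 | h3
            · exact h3
            · exfalso
              have hle := hmin (π v) (hπ v hs).1.1
              rw [hpc, hpc, ctP v hs, ctE v hs hne] at hle
              obtain ⟨δp, p0, p1, p2, -⟩ := main (π v)
              have hDp : D (π v) ≤ d (π v) + phi r (d (π v)) := by
                have := phi_mono hr p1
                linarith
              have hk := key_ineq hr hb hβ1 hβ2 hm (hcn (v, σ v)) h0 h1 h2 hDp
                (hcn (v, π v)) (hπ v hs).2 ((hπ v hs).1.2 _ (hσ v hv).1) h3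
              rw [← (hσ v hv).2] at hk
              linarith
          · cases ih with
            | tgt => exact absurd rfl hv
            | mem _ h => exact absurd h hs
            | step _ _ h => exact h
        · exfalso
          obtain ⟨w', hw', hle'⟩ := hatt v hv
          have hle := hmin w' hw'
          rw [hpc, hpc, ctM v w hv hw hp] at hle
          have a1 := hM v
          have a2 : 0 ≤ βc v * D w := mul_nonneg (by linarith) (hDnn w)
          have a3 : βc v * D w' ≤ 1 * D w' :=
            mul_le_mul_of_nonneg_right (by linarith) (hDnn w')
          have a4 := hcn (v, w)
          linarith
  intro v hreach hv
  change v ≠ G.t at hv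
  obtain ⟨hβ1, hβ2⟩ := hβ v
  obtain ⟨w, hw, hmin⟩ := G.exists_min_succ
    (fun w => (G.withCost ct hct).pc (βc v) (v, w)) (hG.out v hv)
  have hβ0 : 0 < βc v := by linarith
  refine ⟨w, ⟨hw, hmin⟩, ?_⟩
  by_cases hs : S v
  · refine (hmin (π v) (hπ v hs).1.1).trans ?_
    simp only [hpc]
    rw [ctP v hs]
    obtain ⟨δ, h0, h1, h2, -⟩ := main (π v)
    have hpcb : G.c (v, π v) + b * d (π v) ≤ b * r := (hπ v hs).2
    have hc := hcn (v, π v)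
    have hdr : d (π v) ≤ r := by
      have : b * d (π v) ≤ b * r := by linarith
      exact le_of_mul_le_mul_left this hb
    have a1 : βc v * D (π v) ≤ βc v * (d (π v) + r) :=
      mul_le_mul_of_nonneg_left (by linarith [phi_le (x := δ) hr]) hβ0.le
    have a2 : b * (r - d (π v)) ≤ βc v * (r - d (π v)) :=
      mul_le_mul_of_nonneg_right hβ1 (by linarith)
    have a3 : βc v * (2 * r) ≤ βc v * R := mul_le_mul_of_nonneg_left hR2 hβ0.le
    linarith
  · have hS := hsafe v hreach
    cases hS with
    | tgt => exact absurd rfl hv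
    | mem _ h => exact absurd h hs
    | step _ hok _ =>
      refine (hmin (σ v) (hσ v hv).1).trans ?_
      simp only [hpc]
      rw [ctN v hs]
      have hc := hcn (v, σ v)
      have hDR : 0 ≤ R - D (σ v) := by
        have : b * D (σ v) ≤ b * R := by linarith
        have := le_of_mul_le_mul_left this hb
        linarith
      have a2 : b * (R - D (σ v)) ≤ βc v * (R - D (σ v)) :=
        mul_le_mul_of_nonneg_right hβ1 hDR
      linarith

lemma isPath_suffix (G : TaskGraph n) : ∀ (P : List (Fin n)) (v : Fin n), G.IsPath P → v ∈ P →
    ∃ Q, G.IsPath (v :: Q)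
  | [], _, h, _ => h.elim
  | [x], v, h, hv => by
    simp at hv
    subst hv
    exact ⟨[], h⟩
  | x :: y :: rest, v, h, hv => by
    rcases List.mem_cons.1 hv with hv | hv
    · subst hv
      exact ⟨_, h⟩
    · exact isPath_suffix G (y :: rest) v h.2 hv

lemma rank_le (G : TaskGraph n) (rank : Fin n → ℕ) (hrank : ∀ e ∈ G.E, rank e.1 < rank e.2) :
    ∀ (P : List (Fin n)) (v : Fin n), G.IsPath (v :: P) → rank v ≤ rank G.t
  | [], v, h => by
    have h' : v = G.t := h
    rw [h']
  | y :: rest, v, h => (hrank _ h.1).le.trans (rank_le G rank hrank rest y h.2)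

lemma good_of (G : TaskGraph n)
    (hdag : ∃ rank : Fin n → ℕ, ∀ e ∈ G.E, rank e.1 < rank e.2)
    (hconn : ∀ v : Fin n, ∃ P : List (Fin n),
      G.IsPath P ∧ P.head? = some G.s ∧ v ∈ P) : G.Good := by
  obtain ⟨rank, hrank⟩ := hdag
  have hsuf : ∀ v, ∃ Q, G.IsPath (v :: Q) := by
    intro v
    obtain ⟨P, hP, -, hv⟩ := hconn v
    exact G.isPath_suffix P v hP hv
  have hle : ∀ v, rank v ≤ rank G.t := by
    intro v
    obtain ⟨Q, hQ⟩ := hsuf v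
    exact G.rank_le rank hrank Q v hQ
  refine ⟨?_, ?_, ?_⟩
  · refine Subrelation.wf ?_ (measure (fun v => rank G.t - rank v)).wf
    intro w v h
    have h1 := hrank _ h
    have h2 := hle w
    change rank G.t - rank w < rank G.t - rank v
    simp only at h1
    omega
  · intro v hv
    obtain ⟨Q, hQ⟩ := hsuf v
    match Q, hQ with
    | [], hQ => exact absurd hQ hv
    | w :: rest, hQ => exact ⟨w, hQ.1⟩
  · intro w hw
    have h1 := hrank _ hw
    have h2 := hle w
    simp only at h1
    omega

lemma Motivating.mono {G : TaskGraph n} {β r r' : ℝ} (hβ : 0 ≤ β) (h : G.Motivating β r)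
    (hr : r ≤ r') : G.Motivating β r' := by
  intro v hv ht
  obtain ⟨w, hw, hle⟩ := h v hv ht
  exact ⟨w, hw, hle.trans (mul_le_mul_of_nonneg_left hr hβ)⟩

lemma withCost_withCost (G : TaskGraph n) (ct h ct' h') :
    (G.withCost ct h).withCost ct' h' =
      G.withCost (fun e => ct e + ct' e) (fun e => add_nonneg (h e) (h' e)) := by
  simp only [withCost, add_assoc]

/-- A reward large enough for every bias in `[b, 1]` without any extra costs. -/
lemma big_reward {G : TaskGraph n} (hG : G.Good) {b : ℝ} (hb : 0 < b) :
    ∃ K, ∀ β, b ≤ β → (G.withCost (fun _ => 0) (fun _ => le_rfl)).Motivating β K := by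
  set H := G.withCost (fun _ => 0) (fun _ => le_rfl) with hH
  have hHG : H.Good := hG.withCost _ _
  refine ⟨∑ e : Fin n × Fin n, (H.c e / b + H.dist e.2), ?_⟩
  intro β hβ v _ hv
  obtain ⟨w, hw, hmin⟩ := H.exists_min_succ (fun w => H.pc β (v, w)) (hHG.out v hv)
  refine ⟨w, ⟨hw, hmin⟩, ?_⟩
  have h1 : H.c (v, w) / b + H.dist w ≤ ∑ e : Fin n × Fin n, (H.c e / b + H.dist e.2) :=
    Finset.single_le_sum (f := fun e : Fin n × Fin n => H.c e / b + H.dist e.2)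
      (fun e _ => add_nonneg (div_nonneg (H.c_nonneg e) hb.le) (H.dist_nonneg _))
      (Finset.mem_univ (v, w))
  have h2 := mul_le_mul_of_nonneg_left h1 (hb.le.trans hβ)
  have h3 : H.c (v, w) ≤ β * (H.c (v, w) / b) := by
    have : b * (H.c (v, w) / b) = H.c (v, w) := by field_simp
    have h4 := mul_le_mul_of_nonneg_right hβ (div_nonneg (H.c_nonneg (v, w)) hb.le)
    linarith
  simp only [pc]
  linarith

end TaskGraph

open TaskGraph in
/-- The price of variability is at most `τ + 1`, where `τ = max B / min B` is the
range of the present bias set: for every task graph `G` (a finite DAG in which every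
node lies on some `s`–`t` path) and every `B ⊆ (0,1]` with minimum `b` and maximum
`mB`, the infimal reward `r(G,B^V)` admitting a cost configuration motivating for all
present bias configurations `β ∈ B^V` is at most `(τ + 1)` times the supremum over
`β ∈ B` of the infimal reward `r(G,{β})` for the fixed bias `β`. -/
theorem price_of_variability_le (n : ℕ) (G : TaskGraph n)
    (hdag : ∃ rank : Fin n → ℕ, ∀ e ∈ G.E, rank e.1 < rank e.2)
    (hconn : ∀ v : Fin n, ∃ P : List (Fin n),
      G.IsPath P ∧ P.head? = some G.s ∧ v ∈ P)
    (B : Set ℝ) (hB : B ⊆ Set.Ioc 0 1)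
    (b mB : ℝ) (hb : IsLeast B b) (hmB : IsGreatest B mB) :
    G.rewardInfV B ≤ (mB / b + 1) * sSup ((fun β => G.rewardInf {β}) '' B) := by
  have hb0 : 0 < b := (hB hb.1).1
  have hm1 : mB ≤ 1 := (hB hmB.1).2
  have hbm : b ≤ mB := hb.2 hmB.1
  have hm0 : 0 < mB := hb0.trans_le hbm
  have hG : G.Good := G.good_of hdag hconn
  by_cases hst : G.s = G.t
  · have hV : G.rewardInfV B = 0 := by
      unfold rewardInfV
      refine Eq.trans (congrArg sInf ?_) Real.sInf_univ
      rw [Set.eq_univ_iff_forall]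
      intro r
      refine ⟨fun _ => 0, fun _ => le_rfl, fun βc _ v hv hne => ?_⟩
      exfalso
      rcases Relation.ReflTransGen.cases_head hv with h | ⟨w, h, -⟩
      · exact hne (h.symm.trans hst)
      · exact hG.tout w (hst ▸ h.1)
    have hF : ∀ β, G.rewardInf {β} = 0 := by
      intro β
      unfold rewardInf
      refine Eq.trans (congrArg sInf ?_) Real.sInf_univ
      rw [Set.eq_univ_iff_forall]
      intro r
      refine ⟨fun _ => 0, fun _ => le_rfl, fun β' _ v hv hne => ?_⟩
      exfalso
      rcases Relation.ReflTransGen.cases_head hv with h | ⟨w, h, -⟩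
      · exact hne (h.symm.trans hst)
      · exact hG.tout w (hst ▸ h.1)
    rw [hV]
    refine mul_nonneg (by positivity) (Real.sSup_nonneg ?_)
    rintro _ ⟨β, -, rfl⟩
    exact (hF β).ge
  · have hpos : ∀ β ∈ B, ∀ r ∈ {r : ℝ | ∃ ct : Fin n × Fin n → ℝ, ∃ h : ∀ e, 0 ≤ ct e,
        ∀ β' ∈ ({β} : Set ℝ), (G.withCost ct h).Motivating β' r}, 0 ≤ r := by
      rintro β hβ r ⟨ct, h, hr⟩
      have hβ0 : 0 < β := (hB hβ).1
      obtain ⟨w, -, hle⟩ := hr β rfl G.s Relation.ReflTransGen.refl hst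
      have := (G.withCost ct h).pc_nonneg hβ0.le (G.s, w)
      exact nonneg_of_mul_nonneg_right (this.trans hle) hβ0
    have hposV : ∀ r ∈ {r : ℝ | ∃ ct : Fin n × Fin n → ℝ, ∃ h : ∀ e, 0 ≤ ct e,
        ∀ βc : Fin n → ℝ, (∀ v, βc v ∈ B) → (G.withCost ct h).MotivatingV βc r}, 0 ≤ r := by
      rintro r ⟨ct, h, hr⟩
      obtain ⟨w, -, hle⟩ := hr (fun _ => b) (fun _ => hb.1) G.s Relation.ReflTransGen.refl hst
      have := (G.withCost ct h).pc_nonneg hb0.le (G.s, w)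
      exact nonneg_of_mul_nonneg_right (this.trans hle) hb0
    obtain ⟨K, hK⟩ := big_reward hG hb0
    have hbdd : BddAbove ((fun β => G.rewardInf {β}) '' B) := by
      refine ⟨K, ?_⟩
      rintro _ ⟨β, hβ, rfl⟩
      refine csInf_le ⟨0, hpos β hβ⟩ ⟨_, fun _ => le_rfl, fun β' hβ' => ?_⟩
      rw [Set.mem_singleton_iff.1 hβ']
      exact hK β (hb.2 hβ)
    have hτ : 0 < mB / b + 1 := by positivity
    have hfin : G.rewardInfV B ≤ (mB / b + 1) * G.rewardInf {b} := by
      rw [← div_le_iff₀' hτ]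
      refine le_csInf ⟨K, _, fun _ => le_rfl, fun β' hβ' => ?_⟩ ?_
      · rw [Set.mem_singleton_iff.1 hβ']
        exact hK b le_rfl
      · intro r hr
        have hr0 := hpos b hb.1 r hr
        obtain ⟨ct, h, hmot⟩ := hr
        refine le_of_forall_pos_le_add fun ε hε => ?_
        rw [div_le_iff₀' hτ]
        have hmot' := (hmot b rfl).mono hb0.le (show r ≤ r + ε by linarith)
        obtain ⟨ct', h', hV⟩ := core (hG.withCost ct h) (show 0 < r + ε by linarith) hb0 hbm hm1
          hmot'
        refine csInf_le ⟨0, hposV⟩ ⟨fun e => ct e + ct' e,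
          fun e => add_nonneg (h e) (h' e), fun βc hβc => ?_⟩
        rw [← withCost_withCost]
        exact hV βc fun v => ⟨hb.2 (hβc v), hmB.2 (hβc v)⟩
    refine hfin.trans (mul_le_mul_of_nonneg_left ?_ hτ.le)
    exact le_csSup hbdd ⟨b, hb.1, rfl⟩
end
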